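/- Under assumptions (1)–(4) and assumption (5a) — there exists t_ρ ∈ [0,1] with F_up(t_ρ) < 0 — there exist λ_ρ⁺ > 0, λ_ρ⁻ < 0 and functions u⁺, u⁻ ∈ C([0,1]) with ‖u⁺‖_∞ = ‖u⁻‖_∞ = ρ such that u⁺(t) = λ_ρ⁺ ∫₀¹ k(t,s) f(s, u⁺(s), H[u⁺]) ds and u⁻(t) = λ_ρ⁻ ∫₀¹ k(t,s) f(s, u⁻(s), H[u⁻]) ds for all t ∈ [0,1]. -/

import Mathlib

/-!
The Hammerstein operator `T u = ∫ k(·, s) f(s, u(s), H[u]) ds` is continuous on the closed ball of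
radius `ρ` and has relatively compact range by Arzelà–Ascoli. Since `k ≥ 0` and `f ≤ f_up`, every
`T u` takes at `tρ` a value at most `F_up(tρ) < 0`, so the range of `T` stays away from `0`. The maps
`u ↦ ±ρ T u / ‖T u‖` are then continuous with values in a compact subset of the sphere of radius `ρ`,
and a fixed point of one of them is an eigenfunction with eigenvalue parameter `±ρ / ‖T u‖`
(`birkhoff_kellogg`).

The fixed point comes from Schauder's theorem (`schauder`), which is reduced to Brouwer's theorem by
projecting onto the convex hull of a finite net (`exists_dist_le_of_range_subset`). Brouwer's theorem
(`brouwer`) is proved analytically, following Milnor and Rogers. A bounded map without fixed points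
would yield a `C¹` map `h` of a ball into its boundary sphere, equal to the identity on the sphere.
For small `t` the map `id + t (h - id)` is a bijection of the ball, so the integral of its Jacobian
determinant is the volume of the ball; that integral is a polynomial in `t`, so the identity persists
at `t = 1` (`exists_det_ne_zero`), where the determinant vanishes because `h` takes values in a
sphere.
-/

open MeasureTheory Set

/-! ### Brouwer's fixed point theorem -/

open Metric Filter Topology in
/-- The function `t ↦ det (1 + t A)` is a polynomial of degree at most `dim E`, so Lagrange
interpolation recovers its value at `1` from `dim E + 1` nodes, with weights independent of `A`. -/
theorem det_one_add_eq_sum {E : Type*} [NormedAddCommGroup E] [NormedSpace ℝ E]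
    [FiniteDimensional ℝ E] (s : Finset ℝ) (hs : s.card = Module.finrank ℝ E + 1)
    (A : E →L[ℝ] E) :
    (1 + A).det = ∑ t ∈ s, (Lagrange.basis s id t).eval 1 * (1 + t • A).det := by
  classical
  let b := Module.finBasis ℝ E
  let M : Matrix (Fin (Module.finrank ℝ E)) (Fin (Module.finrank ℝ E)) ℝ :=
    LinearMap.toMatrix b b (A : E →ₗ[ℝ] E)
  let P : Polynomial ℝ :=
    Matrix.det ((Polynomial.X : Polynomial ℝ) • M.map Polynomial.C +
      (1 : Matrix (Fin (Module.finrank ℝ E)) (Fin (Module.finrank ℝ E)) ℝ).map Polynomial.C)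
  have hP : ∀ t : ℝ, P.eval t = (1 + t • A).det := by
    intro t
    have h1 : P.eval t = (t • M + 1).det := by
      simp only [P]
      rw [← Polynomial.coe_evalRingHom, RingHom.map_det]
      congr 1
      ext i j
      rcases eq_or_ne i j with rfl | hij
      · simp
        exact mul_comm _ _
      · simp [hij]
        exact mul_comm _ _
    rw [h1, ContinuousLinearMap.det, ← LinearMap.det_toMatrix b]
    congr 1
    rw [add_comm]
    simp [M, LinearMap.toMatrix_one]
  have hdeg : P.degree < s.card := by
    refine lt_of_le_of_lt Polynomial.degree_le_natDegree ?_
    have := Polynomial.natDegree_det_X_add_C_le M 1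
    rw [Fintype.card_fin] at this
    rw [hs]
    exact_mod_cast Nat.lt_succ_of_le this
  have h := Lagrange.eq_interpolate (s := s) (v := id) (f := P) Function.injective_id.injOn hdeg
  have h2 := congrArg (Polynomial.eval 1) h
  rw [hP, Lagrange.interpolate_apply, Polynomial.eval_finsetSum] at h2
  simp only [one_smul, Polynomial.eval_mul, Polynomial.eval_C, id, hP] at h2
  rw [h2]
  exact Finset.sum_congr rfl fun t _ => mul_comm _ _

open Metric Filter Topology in
/-- A segment leaving the ball crosses the sphere, where `g` vanishes, so extension by zero does not
increase the Lipschitz constant. -/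
theorem exists_lipschitzWith_indicator {E F : Type*} [NormedAddCommGroup E] [NormedSpace ℝ E]
    [NormedAddCommGroup F]
    {g : E → F} {C : NNReal} {R : ℝ}
    (hg : LipschitzOnWith C g (closedBall 0 R)) (h0 : ∀ x, ‖x‖ = R → g x = 0) :
    LipschitzWith C ((closedBall (0 : E) R).indicator g) := by
  have key : ∀ x y : E, ‖x‖ ≤ R → R < ‖y‖ → ‖g x‖ ≤ C * dist x y := by
    intro x y hx hy
    have hc : ContinuousOn (fun t : ℝ => ‖AffineMap.lineMap x y t‖) (Icc 0 1) := by
      apply Continuous.continuousOn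
      exact AffineMap.lineMap_continuous.norm
    obtain ⟨t, ht, hz⟩ := intermediate_value_Icc zero_le_one hc
      (show R ∈ Icc _ _ by simpa using ⟨hx, hy.le⟩)
    have := hg.dist_le_mul x (by simpa using hx) (AffineMap.lineMap x y t) (by simpa using hz.le)
    rw [h0 _ hz, dist_zero_right, dist_left_lineMap] at this
    refine this.trans ?_
    rw [Real.norm_of_nonneg ht.1]
    gcongr
    exact mul_le_of_le_one_left dist_nonneg ht.2
  refine LipschitzWith.of_dist_le_mul fun x y => ?_
  by_cases hx : ‖x‖ ≤ R <;> by_cases hy : ‖y‖ ≤ R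
  · rw [indicator_of_mem (by simpa using hx), indicator_of_mem (by simpa using hy)]
    exact hg.dist_le_mul x (by simpa using hx) y (by simpa using hy)
  · rw [indicator_of_mem (by simpa using hx), indicator_of_notMem (by simpa using hy),
      dist_zero_right]
    exact key x y hx (not_le.1 hy)
  · rw [indicator_of_notMem (by simpa using hx), indicator_of_mem (by simpa using hy),
      dist_zero_left, dist_comm]
    exact key y x hy (not_le.1 hx)
  · rw [indicator_of_notMem (by simpa using hx), indicator_of_notMem (by simpa using hy), dist_self]
    positivity

open Metric Filter Topology in
/-- Solving `x + t g(x) = y` is a fixed point problem for the contraction `x ↦ y - t g(x)`. -/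
theorem bijective_add_smul {E : Type*} [NormedAddCommGroup E] [NormedSpace ℝ E]
    [CompleteSpace E] {g : E → E} {C : NNReal} (hg : LipschitzWith C g) {t : ℝ}
    (ht : ‖t‖₊ * C < 1) : Function.Bijective (fun x => x + t • g x) := by
  have hl : ∀ y, ContractingWith (‖t‖₊ * C) (fun x => y - t • g x) := by
    intro y
    refine ⟨ht, LipschitzWith.of_dist_le_mul fun a b => ?_⟩
    rw [dist_sub_left, dist_smul₀, NNReal.coe_mul, coe_nnnorm, mul_assoc]
    gcongr
    exact hg.dist_le_mul a b
  constructor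
  · intro a b hab
    refine (hl (a + t • g a)).fixedPoint_unique' ?_ ?_
    · simp [Function.IsFixedPt]
    · simp only [Function.IsFixedPt]
      simp only at hab
      rw [hab]; abel
  · intro y
    refine ⟨ContractingWith.fixedPoint _ (hl y), ?_⟩
    have := (hl y).fixedPoint_isFixedPt
    simp only [Function.IsFixedPt] at this
    exact add_eq_of_eq_sub this.symm

open Metric Filter Topology in
/-- The map `id + g` fixes the sphere of radius `R` pointwise; its derivative cannot be singular throughout the
ball, because the integral of its Jacobian determinant is the volume of the ball. -/
theorem exists_det_ne_zero {E : Type*} [NormedAddCommGroup E] [NormedSpace ℝ E]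
    [FiniteDimensional ℝ E] {g : E → E} (hg : ContDiff ℝ 1 g) {R : ℝ} (hR : 0 < R)
    (h0 : ∀ x, ‖x‖ = R → g x = 0) : ∃ x ∈ ball (0 : E) R, (1 + fderiv ℝ g x).det ≠ 0 := by
  have : ProperSpace E := FiniteDimensional.proper ℝ E
  let _ : MeasurableSpace E := borel E
  have : BorelSpace E := ⟨rfl⟩
  let μ : Measure E := Measure.addHaar
  obtain ⟨C, hC⟩ := hg.contDiffOn.exists_lipschitzOnWith one_ne_zero (convex_closedBall 0 R)
    (isCompact_closedBall 0 R)
  have hL := exists_lipschitzWith_indicator hC h0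
  set g₁ := (closedBall (0 : E) R).indicator g with hg₁
  have hdet : Continuous fun p : ℝ × E => (1 + p.1 • fderiv ℝ g p.2).det := by
    have := hg.continuous_fderiv one_ne_zero
    exact ContinuousLinearMap.continuous_det.comp (by fun_prop)
  have hpos : ∀ᶠ t in 𝓝 (0 : ℝ), ∀ x ∈ closedBall (0 : E) R, 0 < (1 + t • fderiv ℝ g x).det := by
    refine (isCompact_closedBall 0 R).eventually_forall_of_forall_eventually fun x _ => ?_
    refine hdet.continuousAt.eventually_const_lt ?_
    simp [ContinuousLinearMap.det]
  have hsmall : ∀ᶠ t in 𝓝 (0 : ℝ), ‖t‖₊ * C < 1 := by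
    have : Continuous fun t : ℝ => ‖t‖₊ * C := by fun_prop
    exact this.continuousAt.eventually_lt_const (by simp)
  -- For small `t` the map `id + t g` permutes the ball with positive Jacobian, so the integral of the
  -- Jacobian does not depend on `t`.
  have hvol : ∀ᶠ t in 𝓝 (0 : ℝ),
      ∫ x in ball (0 : E) R, (1 + t • fderiv ℝ g x).det ∂μ = μ.real (ball (0 : E) R) := by
    filter_upwards [hpos, hsmall] with t htpos htC
    have hbij := bijective_add_smul hL htC
    have hout : ∀ x, x ∉ ball (0 : E) R → x + t • g₁ x = x := by
      intro x hx
      have hx' : R ≤ ‖x‖ := by simpa using hx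
      have : g₁ x = 0 := by
        rcases hx'.eq_or_lt with h | h
        · rw [hg₁, indicator_of_mem (by simpa using h.ge), h0 x h.symm]
        · rw [hg₁, indicator_of_notMem (by simpa using h)]
      simp [this]
    have himg : (fun x => x + t • g₁ x) '' ball (0 : E) R = ball 0 R := by
      have h1 : (fun x => x + t • g₁ x) '' (ball (0 : E) R)ᶜ = (ball 0 R)ᶜ := by
        exact (image_congr hout).trans (image_id' _)
      rw [image_compl_eq hbij] at h1
      exact compl_injective h1
    have hcv := integral_image_eq_integral_abs_det_fderiv_smul μ (s := ball (0 : E) R)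
      (f := fun x => x + t • g₁ x) (f' := fun x => 1 + t • fderiv ℝ g x) measurableSet_ball
      (by
        intro x hx
        have hd : HasFDerivAt (fun x => x + t • g x) (1 + t • fderiv ℝ g x) x :=
          (hasFDerivAt_id x).add
            (((hg.differentiable one_ne_zero x).hasFDerivAt).const_smul t)
        refine hd.hasFDerivWithinAt.congr (fun y hy => ?_) ?_
        · rw [hg₁, indicator_of_mem (ball_subset_closedBall hy)]
        · rw [hg₁, indicator_of_mem (ball_subset_closedBall hx)])
      hbij.injective.injOn (fun _ => (1 : ℝ))
    rw [himg] at hcv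
    simp only [smul_eq_mul, mul_one, setIntegral_const] at hcv
    rw [hcv]
    refine setIntegral_congr_fun measurableSet_ball fun x hx => ?_
    exact (abs_of_pos (htpos x (ball_subset_closedBall hx))).symm
  obtain ⟨ε, hε, hball⟩ := Metric.eventually_nhds_iff_ball.1 hvol
  obtain ⟨s, hsε, hs⟩ := (infinite_of_mem_nhds (0 : ℝ) (ball_mem_nhds 0 hε)).exists_subset_card_eq
    (Module.finrank ℝ E + 1)
  have hint : ∀ t : ℝ, IntegrableOn (fun x => (1 + t • fderiv ℝ g x).det) (ball (0 : E) R) μ :=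
    fun t => ((hdet.comp (Continuous.prodMk_right t)).continuousOn.integrableOn_compact
      (isCompact_closedBall 0 R)).mono_set ball_subset_closedBall
  have hsum : ∑ t ∈ s, (Lagrange.basis s id t).eval 1 = (1 : ℝ) := by
    rw [← Polynomial.eval_finsetSum, Lagrange.sum_basis Function.injective_id.injOn
      (Finset.card_pos.1 (by omega)), Polynomial.eval_one]
  -- The integral is a polynomial in `t`, constant near `0`, so it has the same value at `t = 1`.
  have hone : ∫ x in ball (0 : E) R, (1 + fderiv ℝ g x).det ∂μ = μ.real (ball (0 : E) R) := by
    rw [integral_congr_ae (.of_forall fun x => det_one_add_eq_sum s hs (fderiv ℝ g x)),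
      integral_finsetSum _ fun t _ => (hint t).const_mul _]
    calc _ = ∑ t ∈ s, (Lagrange.basis s id t).eval 1 * μ.real (ball (0 : E) R) :=
          Finset.sum_congr rfl fun t ht => by
            rw [integral_const_mul, hball t (hsε ht)]
      _ = _ := by rw [← Finset.sum_mul, hsum, one_mul]
  by_contra! hcon
  rw [setIntegral_congr_fun measurableSet_ball hcon, integral_zero] at hone
  exact (ENNReal.toReal_pos (measure_ball_pos μ 0 hR).ne' measure_ball_lt_top.ne).ne hone

open Metric Filter Topology in
/-- **Brouwer's fixed point theorem**, for bounded continuous self-maps of a Euclidean space. -/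
theorem brouwer {E : Type*} [NormedAddCommGroup E] [InnerProductSpace ℝ E]
    [FiniteDimensional ℝ E] {f : E → E} (hf : Continuous f) {M : ℝ} (hM : ∀ x, ‖f x‖ ≤ M) :
    ∃ x, f x = x := by
  by_contra! hne
  have hM0 : 0 ≤ M := (norm_nonneg _).trans (hM 0)
  -- A cutoff equal to `1` on the ball of radius `M + 1` and to `0` outside that of radius `M + 2`;
  -- truncating `f` by it creates no fixed point, because `‖f x‖ < ‖x‖` wherever it is not `1`.
  let χ : E → ℝ := fun x => max 0 (min 1 (M + 2 - ‖x‖))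
  have hχ0 : ∀ x, 0 ≤ χ x := fun x => le_max_left _ _
  have hχ1 : ∀ x, χ x ≤ 1 := fun x => max_le zero_le_one (min_le_left _ _)
  let w : E → E := fun x => χ x • f x
  have hw : Continuous w := by fun_prop
  have hwne : ∀ x, x - w x ≠ 0 := by
    intro x hx
    rw [sub_eq_zero] at hx
    by_cases hxM : ‖x‖ ≤ M + 1
    · have : χ x = 1 := by
        simp only [χ]
        rw [min_eq_left (by linarith), max_eq_right zero_le_one]
      simp only [w, this, one_smul] at hx
      exact hne x hx.symm
    · have : ‖w x‖ ≤ M := by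
        simp only [w, norm_smul, Real.norm_of_nonneg (hχ0 x)]
        exact (mul_le_of_le_one_left (norm_nonneg _) (hχ1 x)).trans (hM x)
      rw [← hx] at this
      linarith
  -- The error allowed at `x` is the displacement `‖x - w x‖`, so `p` is also fixed-point free.
  obtain ⟨p, hp, hpw, hpsupp⟩ := hw.exists_contDiff_approx 1 (ε := fun x => ‖x - w x‖)
    (by fun_prop) (fun x => norm_pos_iff.2 (hwne x))
  have hv : ∀ x, x - p x ≠ 0 := by
    intro x hx
    have := hpw x
    rw [dist_eq_norm, ← sub_eq_zero.1 hx] at this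
    exact lt_irrefl _ this
  set R := M + 2
  have hR : 0 < R := by positivity
  have hpout : ∀ x, ‖x‖ = R → p x = 0 := by
    intro x hx
    by_contra h
    have := hpsupp h
    simp [w, χ, hx, R] at this
  -- A `C¹` map into the sphere of radius `R` which restricts to the identity on that sphere.
  let h : E → E := fun x => (R / ‖x - p x‖) • (x - p x)
  have hh : ContDiff ℝ 1 h := by
    have h1 : ContDiff ℝ 1 (fun x => x - p x) := contDiff_id.sub hp
    exact (contDiff_const.div (h1.norm ℝ hv) fun x => norm_ne_zero_iff.2 (hv x)).smul h1
  have hnorm : ∀ x, ‖h x‖ = R := by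
    intro x
    have := norm_ne_zero_iff.2 (hv x)
    simp only [h, norm_smul, norm_div, norm_norm, Real.norm_of_nonneg hR.le]
    field_simp
  obtain ⟨x, -, hx⟩ := exists_det_ne_zero (g := fun x => h x - x) (hh.sub contDiff_id) hR (by
    intro x hx
    simp only [h, hpout x hx, sub_zero, hx, div_self hR.ne', one_smul, sub_self])
  have hd : DifferentiableAt ℝ h x := hh.differentiable one_ne_zero x
  have hfd : 1 + fderiv ℝ (fun x => h x - x) x = fderiv ℝ h x := by
    rw [fderiv_fun_sub hd differentiableAt_fun_id, fderiv_fun_id]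
    exact add_sub_cancel _ _
  rw [hfd] at hx
  -- The image of `h` lies in a sphere, so the range of its derivative is orthogonal to `h x`.
  have horth : ∀ y, inner ℝ (h x) (fderiv ℝ h x y) = 0 := by
    intro y
    have h1 : HasFDerivAt (fun x => ‖h x‖ ^ 2) _ x := hd.hasFDerivAt.norm_sq
    simp only [hnorm] at h1
    have h2 := h1.unique (hasFDerivAt_const _ x)
    have := DFunLike.congr_fun h2 y
    simpa using this
  have hsurj : Function.Surjective (fderiv ℝ h x) := by
    exact ((Module.End.isUnit_iff _).1
      ((LinearMap.isUnit_iff_isUnit_det _).2 (isUnit_iff_ne_zero.2 hx))).surjective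
  obtain ⟨y, hy⟩ := hsurj (h x)
  have := horth y
  rw [hy, inner_self_eq_zero] at this
  have h3 := hnorm x
  rw [this, norm_zero] at h3
  exact hR.ne h3

/-! ### Schauder's fixed point theorem -/

open Metric Filter Topology in
/-- Approximate fixed points from the Schauder projection: a partition of unity subordinate to a
finite `ε`-net of `K` turns `G` into a continuous map of a Euclidean space into a simplex, to which
Brouwer's theorem applies. -/
theorem exists_dist_le_of_range_subset {E : Type*} [NormedAddCommGroup E] [NormedSpace ℝ E]
    {G : E → E} (hG : Continuous G) {K : Set E} (hK : IsCompact K) (hGK : ∀ x, G x ∈ K)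
    {ε : ℝ} (hε : 0 < ε) : ∃ x, dist x (G x) ≤ ε := by
  obtain ⟨s, -, hsf, hsK⟩ := hK.finite_cover_balls hε
  let ι := hsf.toFinset
  let φ : ι → E → ℝ := fun i x => max 0 (ε - dist x i)
  have hφ0 : ∀ i x, 0 ≤ φ i x := fun i x => le_max_left _ _
  have hφc : ∀ i, Continuous (φ i) := fun i => by fun_prop
  have hφpos : ∀ x ∈ K, 0 < ∑ i, φ i x := by
    intro x hx
    obtain ⟨y, hys, hy⟩ := mem_iUnion₂.1 (hsK hx)
    refine Finset.sum_pos' (fun i _ => hφ0 i x) ⟨⟨y, hsf.mem_toFinset.2 hys⟩, Finset.mem_univ _, ?_⟩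
    exact lt_max_of_lt_right (sub_pos.2 hy)
  let L : EuclideanSpace ℝ ι → E := fun a => ∑ i, a i • (i : E)
  have hL : Continuous L := by fun_prop
  let Φ : EuclideanSpace ℝ ι → EuclideanSpace ℝ ι := fun a =>
    WithLp.toLp 2 fun i => φ i (G (L a)) / ∑ j, φ j (G (L a))
  have hΦ : Continuous Φ := by
    refine (PiLp.continuous_toLp 2 _).comp (continuous_pi fun i => ?_)
    have h1 : ∀ i, Continuous fun a => φ i (G (L a)) := fun i => (hφc i).comp (hG.comp hL)
    exact (h1 i).div (continuous_finsetSum _ fun j _ => h1 j) fun a => (hφpos _ (hGK _)).ne'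
  have hΦ0 : ∀ a i, 0 ≤ Φ a i := fun a i => div_nonneg (hφ0 _ _) (hφpos _ (hGK _)).le
  have hΦ1 : ∀ a, ∑ i, Φ a i = 1 := by
    intro a
    change ∑ i, φ i (G (L a)) / ∑ j, φ j (G (L a)) = 1
    rw [← Finset.sum_div, div_self (hφpos _ (hGK _)).ne']
  obtain ⟨a, ha⟩ := brouwer hΦ (M := 1) (by
    intro a
    rw [EuclideanSpace.norm_eq, Real.sqrt_le_one]
    rw [← hΦ1 a]
    refine Finset.sum_le_sum fun i _ => ?_
    rw [Real.norm_of_nonneg (hΦ0 a i)]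
    refine pow_le_of_le_one (hΦ0 a i) ?_ two_ne_zero
    rw [← hΦ1 a]
    exact Finset.single_le_sum (fun i _ => hΦ0 a i) (Finset.mem_univ i))
  have ha0 : ∀ i, 0 ≤ a i := fun i => ha ▸ hΦ0 a i
  have ha1 : ∑ i, a i = 1 := by rw [← hΦ1 a, ha]
  refine ⟨L a, ?_⟩
  have h1 : L a - G (L a) = ∑ i, a i • ((i : E) - G (L a)) := by
    simp only [smul_sub, Finset.sum_sub_distrib, ← Finset.sum_smul, ha1, one_smul, L]
  rw [dist_eq_norm, h1]
  calc _ ≤ ∑ i, ‖a i • ((i : E) - G (L a))‖ := norm_sum_le _ _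
    _ ≤ ∑ i, a i * ε := by
      refine Finset.sum_le_sum fun i _ => ?_
      rw [norm_smul, Real.norm_of_nonneg (ha0 i)]
      rcases (ha0 i).eq_or_lt with h | h
      · simp [← h]
      · gcongr
        by_contra! hlt
        have : φ i (G (L a)) = 0 := by
          refine max_eq_left ?_
          rw [dist_comm, dist_eq_norm]
          linarith
        have h2 : a i = φ i (G (L a)) / ∑ j, φ j (G (L a)) := by
          nth_rw 1 [← ha]
        rw [this, zero_div] at h2
        exact h.ne' h2
    _ = ε := by rw [← Finset.sum_mul, ha1, one_mul]

open Metric Filter Topology in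
/-- **Schauder's fixed point theorem**, for a continuous map of a normed space into a compact set. -/
theorem schauder {E : Type*} [NormedAddCommGroup E] [NormedSpace ℝ E]
    {G : E → E} (hG : Continuous G) {K : Set E} (hK : IsCompact K) (hGK : ∀ x, G x ∈ K) :
    ∃ x, G x = x := by
  have h := fun n : ℕ => exists_dist_le_of_range_subset hG hK hGK
    (Nat.one_div_pos_of_nat (α := ℝ) (n := n))
  choose x hx using h
  obtain ⟨y, -, ψ, hψ, hy⟩ := hK.tendsto_subseq fun n => hGK (x n)
  have h0 : Tendsto (fun n => dist (G (x (ψ n))) (x (ψ n))) atTop (𝓝 0) := by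
    refine squeeze_zero (fun _ => dist_nonneg) (fun n => (dist_comm _ _).trans_le (hx (ψ n))) ?_
    exact tendsto_one_div_add_atTop_nhds_zero_nat.comp hψ.tendsto_atTop
  have hxy : Tendsto (fun n => x (ψ n)) atTop (𝓝 y) := hy.congr_dist h0
  exact ⟨y, tendsto_nhds_unique ((hG.tendsto y).comp hxy) hy⟩

/-! ### Compactness and eigenvectors -/

open Metric Filter Topology in
/-- **Arzelà–Ascoli**, with equicontinuity measured through one continuous map `κ` into a metric
space; for an integral operator, `κ t` is the kernel section `k(t, ·)`. -/
theorem isCompact_closure_of_bounded {X : Type*} [TopologicalSpace X] [CompactSpace X]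
    {V : Type*} [PseudoMetricSpace V]
    (κ : X → V) (hκ : Continuous κ) (M N : ℝ) (A : Set C(X, ℝ))
    (hA : ∀ u ∈ A, ∀ t, |u t| ≤ N)
    (hAe : ∀ u ∈ A, ∀ t t', |u t - u t'| ≤ M * dist (κ t) (κ t')) : IsCompact (closure A) := by
  let I := ContinuousMap.isometryEquivBoundedOfCompact X ℝ
  have h := BoundedContinuousFunction.arzela_ascoli (closedBall (0 : ℝ) N)
    (isCompact_closedBall 0 N) (I '' A) (by
      rintro _ t ⟨u, hu, rfl⟩
      rw [mem_closedBall_zero_iff]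
      exact hA u hu t) (by
      intro t₀
      rw [Metric.equicontinuousAt_iff_right]
      intro ε hε
      have hc : Continuous fun t => M * dist (κ t₀) (κ t) := by fun_prop
      have := (hc.tendsto t₀).eventually_lt_const (u := ε) (by simpa using hε)
      filter_upwards [this] with t ht
      rintro ⟨_, u, hu, rfl⟩
      exact (hAe u hu t₀ t).trans_lt ht)
  have h2 := I.toHomeomorph.isCompact_image (s := closure A)
  rw [Homeomorph.image_closure] at h2
  exact h2.1 h

open Metric Filter Topology in
/-- **Birkhoff–Kellogg**: if a compact map `T` stays away from `0`, then `u ↦ (c / ‖T u‖) • T u` has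
a fixed point, which lies on the sphere of radius `|c|` and, for `c ≠ 0`, is an eigenvector of `T`. -/
theorem birkhoff_kellogg {E : Type*} [NormedAddCommGroup E] [NormedSpace ℝ E]
    {T : E → E} (hT : Continuous T) (hK : IsCompact (closure (range T)))
    (h0 : (0 : E) ∉ closure (range T)) (c : ℝ) :
    ∃ u, ‖u‖ = |c| ∧ T u ≠ 0 ∧ u = (c / ‖T u‖) • T u := by
  have hne : ∀ w ∈ closure (range T), ‖w‖ ≠ 0 := fun w hw h => h0 (norm_eq_zero.1 h ▸ hw)
  have hmem : ∀ u, T u ∈ closure (range T) := fun u => subset_closure (mem_range_self u)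
  have hq : ContinuousOn (fun w : E => (c / ‖w‖) • w) (closure (range T)) :=
    (continuousOn_const.div continuousOn_id.norm hne).smul continuousOn_id
  obtain ⟨u, hu⟩ := schauder (G := fun u => (c / ‖T u‖) • T u)
    (hq.comp_continuous hT hmem) (hK.image_of_continuousOn hq) fun u =>
      mem_image_of_mem _ (hmem u)
  refine ⟨u, ?_, norm_ne_zero_iff.1 (hne _ (hmem u)), hu.symm⟩
  rw [← hu, norm_smul, norm_div, norm_norm, div_mul_cancel₀ _ (hne _ (hmem u)), Real.norm_eq_abs]

/-! ### The Hammerstein equation -/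

/-- Under assumptions (1)-(4) and (5a) (F_up(t_rho) < 0 for some t_rho in [0,1]),
the Hammerstein integral equation has a positive and a negative eigenvalue with
eigenfunctions of sup-norm rho. -/
theorem hammerstein_eigenvalues_5a
    (ρ : ℝ) (hρ : 0 < ρ)
    (k : ℝ → ℝ → ℝ)
    (hk_cont : ContinuousOn (fun p : ℝ × ℝ => k p.1 p.2)
      (Set.Icc 0 1 ×ˢ Set.Icc 0 1))
    (hk_nonneg : ∀ t ∈ Set.Icc (0:ℝ) 1, ∀ s ∈ Set.Icc (0:ℝ) 1, 0 ≤ k t s)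
    (H : C(Set.Icc (0:ℝ) 1, ℝ) → ℝ)
    (hH_cont : ContinuousOn H (Metric.closedBall 0 ρ))
    (Hlo Hup : ℝ)
    (hH_bd : ∀ u ∈ Metric.closedBall (0 : C(Set.Icc (0:ℝ) 1, ℝ)) ρ,
      Hlo ≤ H u ∧ H u ≤ Hup)
    (f : ℝ → ℝ → ℝ → ℝ)
    (hf_cont : ContinuousOn (fun p : ℝ × ℝ × ℝ => f p.1 p.2.1 p.2.2)
      (Set.Icc 0 1 ×ˢ Set.Icc (-ρ) ρ ×ˢ Set.Icc Hlo Hup))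
    (flo fup : ℝ → ℝ)
    (hflo_cont : ContinuousOn flo (Set.Icc 0 1))
    (hfup_cont : ContinuousOn fup (Set.Icc 0 1))
    (hf_bd : ∀ t ∈ Set.Icc (0:ℝ) 1, ∀ u ∈ Set.Icc (-ρ) ρ, ∀ v ∈ Set.Icc Hlo Hup,
      flo t ≤ f t u v ∧ f t u v ≤ fup t)
    (tρ : ℝ) (htρ : tρ ∈ Set.Icc (0:ℝ) 1)
    (h5a : (∫ s in (0:ℝ)..1, k tρ s * fup s) < 0) :
    ∃ lamp lamn : ℝ, 0 < lamp ∧ lamn < 0 ∧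
      ∃ up un : C(Set.Icc (0:ℝ) 1, ℝ), ‖up‖ = ρ ∧ ‖un‖ = ρ ∧
        (∀ t : Set.Icc (0:ℝ) 1, up t =
          lamp * ∫ s in (0:ℝ)..1, k t s * f s (up (Set.projIcc 0 1 zero_le_one s)) (H up)) ∧
        (∀ t : Set.Icc (0:ℝ) 1, un t =
          lamn * ∫ s in (0:ℝ)..1, k t s * f s (un (Set.projIcc 0 1 zero_le_one s)) (H un)) := by
  -- The radial retraction onto the closed ball, which makes `H` and `f` meaningful everywhere.
  let P : C(Icc (0:ℝ) 1, ℝ) → C(Icc (0:ℝ) 1, ℝ) := fun u => (ρ / max ρ ‖u‖) • u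
  have hmax : ∀ u : C(Icc (0:ℝ) 1, ℝ), 0 < max ρ ‖u‖ := fun u => lt_max_of_lt_left hρ
  have hP : Continuous P :=
    (continuous_const.div (by fun_prop) fun u => (hmax u).ne').smul continuous_id
  have hPball : ∀ u, P u ∈ Metric.closedBall (0 : C(Icc (0:ℝ) 1, ℝ)) ρ := by
    intro u
    have := hmax u
    rw [mem_closedBall_zero_iff, norm_smul, Real.norm_of_nonneg (by positivity), div_mul_eq_mul_div,
      div_le_iff₀ this]
    gcongr
    exact le_max_right _ _
  have hPid : ∀ u, ‖u‖ = ρ → P u = u := by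
    intro u hu
    simp only [P, hu, max_self, div_self hρ.ne', one_smul]
  have hPapp : ∀ u s, P u s ∈ Icc (-ρ) ρ := fun u s =>
    abs_le.1 (((P u).norm_coe_le_norm s).trans (mem_closedBall_zero_iff.1 (hPball u)))
  have hHP : Continuous fun u => H (P u) := hH_cont.comp_continuous hP hPball
  have hdom : ∀ u (s : Icc (0:ℝ) 1), ((s : ℝ), P u s, H (P u)) ∈
      Icc (0:ℝ) 1 ×ˢ Icc (-ρ) ρ ×ˢ Icc Hlo Hup := fun u s => ⟨s.2, hPapp u s, hH_bd _ (hPball u)⟩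
  have hPev : Continuous fun p : C(Icc (0:ℝ) 1, ℝ) × Icc (0:ℝ) 1 => P p.1 p.2 :=
    continuous_eval.comp ((hP.comp continuous_fst).prodMk continuous_snd)
  -- The superposition operator `u ↦ f(·, u(·), H[u])`, precomposed with the retraction `P`.
  let N : C(C(Icc (0:ℝ) 1, ℝ), C(Icc (0:ℝ) 1, ℝ)) := ContinuousMap.curry
    ⟨fun p => f p.2 (P p.1 p.2) (H (P p.1)),
      hf_cont.comp_continuous (f := fun p : C(Icc (0:ℝ) 1, ℝ) × Icc (0:ℝ) 1 =>
        ((p.2 : ℝ), P p.1 p.2, H (P p.1)))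
        ((continuous_subtype_val.comp continuous_snd).prodMk (hPev.prodMk (hHP.comp continuous_fst)))
        fun p => hdom p.1 p.2⟩
  -- The kernel section `t ↦ k(t, ·)`.
  let κ : C(Icc (0:ℝ) 1, C(Icc (0:ℝ) 1, ℝ)) := ContinuousMap.curry
    ⟨fun p => k p.1 p.2, hk_cont.comp_continuous
      (f := fun p : Icc (0:ℝ) 1 × Icc (0:ℝ) 1 => ((p.1 : ℝ), (p.2 : ℝ))) (by fun_prop)
      fun p => ⟨p.1.2, p.2.2⟩⟩
  let L : C(Icc (0:ℝ) 1, ℝ) → ℝ := fun w => ∫ s in (0:ℝ)..1, w (projIcc 0 1 zero_le_one s)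
  have hwc : ∀ w : C(Icc (0:ℝ) 1, ℝ), Continuous fun s => w (projIcc 0 1 zero_le_one s) :=
    fun w => w.continuous.comp continuous_projIcc
  have hLnorm : ∀ w, |L w| ≤ ‖w‖ := by
    intro w
    have := intervalIntegral.norm_integral_le_of_norm_le_const (a := (0:ℝ)) (b := 1) (C := ‖w‖)
      (f := fun s => w (projIcc 0 1 zero_le_one s)) fun s _ => w.norm_coe_le_norm _
    simpa using this
  have hLsub : ∀ w w', L w - L w' = L (w - w') := fun w w' =>
    (intervalIntegral.integral_sub ((hwc w).intervalIntegrable _ _)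
      ((hwc w').intervalIntegrable _ _)).symm
  have hL : Continuous L := by
    refine (LipschitzWith.of_dist_le_mul (K := 1) fun w w' => ?_).continuous
    rw [Real.dist_eq, hLsub, NNReal.coe_one, one_mul, dist_eq_norm]
    exact hLnorm _
  -- The Hammerstein operator, precomposed with `P`.
  let T : C(C(Icc (0:ℝ) 1, ℝ), C(Icc (0:ℝ) 1, ℝ)) := ContinuousMap.curry
    ⟨fun p => L (κ p.2 * N p.1), hL.comp (by fun_prop)⟩
  have hTL : ∀ u t, T u t = L (κ t * N u) := fun u t => rfl
  have hT : ∀ u (t : Icc (0:ℝ) 1), T u t =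
      ∫ s in (0:ℝ)..1, k t s * f s (P u (projIcc 0 1 zero_le_one s)) (H (P u)) := by
    intro u t
    refine intervalIntegral.integral_congr fun s hs => ?_
    rw [uIcc_of_le zero_le_one] at hs
    change k t (projIcc 0 1 zero_le_one s) * f (projIcc 0 1 zero_le_one s) _ _ = _
    rw [projIcc_of_mem zero_le_one hs]
  obtain ⟨B, hB⟩ := (isCompact_Icc.prod
    (isCompact_Icc.prod isCompact_Icc)).exists_bound_of_continuousOn hf_cont
  have hB0 : 0 ≤ B := (norm_nonneg _).trans (hB _ (hdom 0 ⟨0, by simp⟩))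
  have hN : ∀ u, ‖N u‖ ≤ B := fun u =>
    (ContinuousMap.norm_le _ hB0).2 fun s => hB _ (hdom u s)
  have hcomp : IsCompact (closure (range T)) := by
    refine isCompact_closure_of_bounded κ κ.continuous B (‖κ‖ * B) _ ?_ ?_
    · rintro _ ⟨u, rfl⟩ t
      rw [hTL]
      refine (hLnorm _).trans ((norm_mul_le _ _).trans ?_)
      gcongr
      · exact κ.norm_coe_le_norm t
      · exact hN u
    · rintro _ ⟨u, rfl⟩ t t'
      rw [hTL, hTL, hLsub, ← sub_mul, mul_comm B, dist_eq_norm]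
      refine (hLnorm _).trans ((norm_mul_le _ _).trans ?_)
      gcongr
      exact hN u
  -- Nonnegativity of `k` bounds `T u` at `tρ` by the negative number `F_up(tρ)`, and the bound
  -- passes to the closure of the range.
  have hneg : ∀ w ∈ closure (range T), w ⟨tρ, htρ⟩ ≤ ∫ s in (0:ℝ)..1, k tρ s * fup s := by
    have hclosed : IsClosed {w : C(Icc (0:ℝ) 1, ℝ) |
        w ⟨tρ, htρ⟩ ≤ ∫ s in (0:ℝ)..1, k tρ s * fup s} :=
      isClosed_le (continuous_eval_const _) continuous_const
    refine fun w hw => closure_minimal ?_ hclosed hw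
    rintro _ ⟨u, rfl⟩
    have hktc : ContinuousOn (k tρ) (Icc 0 1) :=
      hk_cont.comp (Continuous.prodMk_right tρ).continuousOn fun s hs => ⟨htρ, hs⟩
    refine intervalIntegral.integral_mono_on zero_le_one ((hwc _).intervalIntegrable _ _)
      ((hktc.mul hfup_cont).intervalIntegrable_of_Icc zero_le_one) fun s hs => ?_
    change k tρ (projIcc 0 1 zero_le_one s) * f (projIcc 0 1 zero_le_one s) _ _ ≤ _
    rw [projIcc_of_mem zero_le_one hs]
    exact mul_le_mul_of_nonneg_left
      (hf_bd s hs _ (hPapp u _) _ (hH_bd _ (hPball u))).2 (hk_nonneg tρ htρ s hs)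
  have h0 : (0 : C(Icc (0:ℝ) 1, ℝ)) ∉ closure (range T) := fun h =>
    (hneg 0 h).not_gt h5a
  obtain ⟨up, hup, hTup, hup'⟩ := birkhoff_kellogg T.continuous hcomp h0 ρ
  obtain ⟨un, hun, hTun, hun'⟩ := birkhoff_kellogg T.continuous hcomp h0 (-ρ)
  rw [abs_of_pos hρ] at hup
  rw [abs_neg, abs_of_pos hρ] at hun
  refine ⟨ρ / ‖T up‖, -ρ / ‖T un‖, div_pos hρ (norm_pos_iff.2 hTup),
    div_neg_of_neg_of_pos (neg_neg_of_pos hρ) (norm_pos_iff.2 hTun), up, un, hup, hun,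
    fun t => ?_, fun t => ?_⟩
  · have h1 := hT up t
    rw [hPid up hup] at h1
    rw [← h1]
    exact DFunLike.congr_fun hup' t
  · have h1 := hT un t
    rw [hPid un hun] at h1
    rw [← h1]
    exact DFunLike.congr_fun hun' t
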